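/- arXiv:1512.01373 — 3 statements merged into one kernel-verified Lean document; each statement's English description precedes it below -/
import Mathlib

section
/- Let σ₂, σ₁₁, σ₁₂, σ₂₂, σ₁₁₁, σ₁₁₂, σ₁₁₁₁ be real constants and for a real 2×2 matrix G define l₄(G) = ½σ₁₁(tr GGᵀ)² + ½σ₂((tr GGᵀ)² − tr((GGᵀ)²)) + 2(σ₁₁₁+σ₁₂)(tr G)² tr GGᵀ + 4σ₁₂(tr G)(tr G · tr GGᵀ − tr G²Gᵀ) − σ₁₂ tr GGᵀ (tr GGᵀ + tr G²) + ((2/3)σ₁₁₁₁ + 4σ₁₁₂ + 2σ₂₂)(tr G)⁴ − 2(σ₁₁₂+σ₂₂)(tr G)²(tr G² + tr GGᵀ) + ½σ₂₂(tr G² + tr GGᵀ)². Then for every real 2×2 matrix G, l₄(G) = e₁(tr G)⁴ + e₂(G₁₂−G₂₁)⁴ + e₃(tr G)²(G₁₂−G₂₁)² + e₄(det G)² + e₅(tr G)²(det G) + e₆(G₁₂−G₂₁)²(det G), where e₁ = ½σ₁₁ + 2σ₁₁₁ + (2/3)σ₁₁₁₁, e₂ = ½σ₁₁ − σ₁₂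 + ½σ₂₂, e₃ = σ₁₁ − σ₁₂ + 2σ₁₁₁ − 2σ₁₁₂, e₄ = 2σ₁₁ − 8σ₁₂ + 8σ₂₂ + σ₂, e₅ = 2(−σ₁₁ + 4σ₁₂ − 2σ₁₁₁ + 4σ₁₁₂), e₆ = 2(−σ₁₁ + 3σ₁₂ − 2σ₂₂). -/
open Matrix

/-- Identity (2.35): explicit form of the quartic part `l₄` of the stored energy:
`l₄(G) = e₁(tr G)⁴ + e₂(G₁₂−G₂₁)⁴ + e₃(tr G)²(G₁₂−G₂₁)² + e₄(det G)²
       + e₅(tr G)²(det G) + e₆(G₁₂−G₂₁)²(det G)`. -/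
theorem l4_identity (σ2 σ11 σ12 σ22 σ111 σ112 σ1111 e1 e2 e3 e4 e5 e6 : ℝ)
    (he1 : e1 = (1 / 2) * σ11 + 2 * σ111 + (2 / 3) * σ1111)
    (he2 : e2 = (1 / 2) * σ11 - σ12 + (1 / 2) * σ22)
    (he3 : e3 = σ11 - σ12 + 2 * σ111 - 2 * σ112)
    (he4 : e4 = 2 * σ11 - 8 * σ12 + 8 * σ22 + σ2)
    (he5 : e5 = 2 * (-σ11 + 4 * σ12 - 2 * σ111 + 4 * σ112))
    (he6 : e6 = 2 * (-σ11 + 3 * σ12 - 2 * σ22))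
    (G : Matrix (Fin 2) (Fin 2) ℝ) :
    (1 / 2) * σ11 * (G * Gᵀ).trace ^ 2
        + (1 / 2) * σ2 * ((G * Gᵀ).trace ^ 2 - (G * Gᵀ * (G * Gᵀ)).trace)
        + 2 * (σ111 + σ12) * G.trace ^ 2 * (G * Gᵀ).trace
        + 4 * σ12 * G.trace * (G.trace * (G * Gᵀ).trace - (G * G * Gᵀ).trace)
        - σ12 * (G * Gᵀ).trace * ((G * Gᵀ).trace + (G * G).trace)
        + ((2 / 3) * σ1111 + 4 * σ112 + 2 * σ22) * G.trace ^ 4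
        - 2 * (σ112 + σ22) * G.trace ^ 2 * ((G * G).trace + (G * Gᵀ).trace)
        + (1 / 2) * σ22 * ((G * G).trace + (G * Gᵀ).trace) ^ 2 =
      e1 * G.trace ^ 4 + e2 * (G 0 1 - G 1 0) ^ 4
        + e3 * G.trace ^ 2 * (G 0 1 - G 1 0) ^ 2
        + e4 * G.det ^ 2 + e5 * G.trace ^ 2 * G.det
        + e6 * (G 0 1 - G 1 0) ^ 2 * G.det := by
  subst he1 he2 he3 he4 he5 he6
  -- The identity is polynomial in the four entries of `G` and linear in the constants.
  simp only [trace_fin_two, det_fin_two, mul_apply, Fin.sum_univ_two, transpose_apply]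
  ring
end

section
/- Let d₁, d₂, d₃ be real constants and let c₁ > c₂ > 0. For a smooth vector field u : ℝ × ℝ² → ℝ² define l₃(∇u) = d₁(∇·u)³ + d₂(∇·u)(∇⊥·u)² + d₃(∇·u)Q₁₂(u¹,u²). Then the following are equivalent: (i) for every unit vector ω ∈ ℝ² and every smooth scalar function ψ₁ : ℝ → ℝ, the pressure plane wave u(t,x) = ω ψ₁(c₁t + ω·x) satisfies l₃(∇u)(t,x) = 0 for all (t,x), and for every unit vector ω and every smooth scalar function ψ₂, the shear plane wave u(t,x) = ω⊥ ψ₂(c₂t + ω·x) satisfies l₃(∇u)(t,x) = 0 for all (t,x); (ii) d₁ = 0. -/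
/-!
The gradient of a plane wave `u = a ψ(τ + ω·x)` is the rank one matrix `ψ' a ⊗ ω`. Hence the null
form `Q₁₂(u¹,u²)`, which is its determinant, vanishes, while the divergence is `(a·ω) ψ'` and the
curl is `(a₁ω₂ − a₂ω₁) ψ'` (`l3_planeWave`). For a pressure wave `a = ω`, so `l₃(∇u) = d₁ (ψ')³`;
for a shear wave `a = ω⊥`, so the divergence, a factor of every term of `l₃`, is zero. The
pressure wave with `ψ = id` then detects `d₁`.
-/

/-- Spatial partial derivative in the first space variable of a function of `(t, x₁, x₂)`. -/
noncomputable def pd1 (f : ℝ → ℝ → ℝ → ℝ) : ℝ → ℝ → ℝ → ℝ :=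
  fun t x1 x2 => deriv (fun y => f t y x2) x1

/-- Spatial partial derivative in the second space variable. -/
noncomputable def pd2 (f : ℝ → ℝ → ℝ → ℝ) : ℝ → ℝ → ℝ → ℝ :=
  fun t x1 x2 => deriv (fun y => f t x1 y) x2

/-- The null form `Q₁₂(v,w) = ∂₁v ∂₂w − ∂₁w ∂₂v`. -/
noncomputable def nullQ (f g : ℝ → ℝ → ℝ → ℝ) : ℝ → ℝ → ℝ → ℝ :=
  fun t x1 x2 => pd1 f t x1 x2 * pd2 g t x1 x2 - pd1 g t x1 x2 * pd2 f t x1 x2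

/-- The divergence `∇·u = ∂₁u¹ + ∂₂u²`. -/
noncomputable def divu (u1 u2 : ℝ → ℝ → ℝ → ℝ) : ℝ → ℝ → ℝ → ℝ :=
  fun t x1 x2 => pd1 u1 t x1 x2 + pd2 u2 t x1 x2

/-- The scalar curl `∇⊥·u = ∂₂u¹ − ∂₁u²`. -/
noncomputable def curlu (u1 u2 : ℝ → ℝ → ℝ → ℝ) : ℝ → ℝ → ℝ → ℝ :=
  fun t x1 x2 => pd2 u1 t x1 x2 - pd1 u2 t x1 x2

/-- The cubic part `l₃(∇u) = d₁(∇·u)³ + d₂(∇·u)(∇⊥·u)² + d₃(∇·u)Q₁₂(u¹,u²)`. -/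
noncomputable def l3 (d1 d2 d3 : ℝ) (u1 u2 : ℝ → ℝ → ℝ → ℝ) : ℝ → ℝ → ℝ → ℝ :=
  fun t x1 x2 =>
    d1 * divu u1 u2 t x1 x2 ^ 3
      + d2 * divu u1 u2 t x1 x2 * curlu u1 u2 t x1 x2 ^ 2
      + d3 * divu u1 u2 t x1 x2 * nullQ u1 u2 t x1 x2

/-- Value of `l₃` on a plane wave with amplitude `(a₁,a₂)` and direction `(w₁,w₂)`: the `d₃` term
drops out because the gradient has rank at most one. -/
theorem l3_planeWave (d1 d2 d3 c a1 a2 w1 w2 : ℝ) (ψ : ℝ → ℝ) (hψ : Differentiable ℝ ψ)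
    (t x1 x2 : ℝ) :
    l3 d1 d2 d3 (fun t x1 x2 => a1 * ψ (c * t + w1 * x1 + w2 * x2))
        (fun t x1 x2 => a2 * ψ (c * t + w1 * x1 + w2 * x2)) t x1 x2
      = (d1 * (a1 * w1 + a2 * w2) ^ 3
          + d2 * (a1 * w1 + a2 * w2) * (a1 * w2 - a2 * w1) ^ 2)
        * deriv ψ (c * t + w1 * x1 + w2 * x2) ^ 3 := by
  have h1 (a : ℝ) : pd1 (fun t x1 x2 => a * ψ (c * t + w1 * x1 + w2 * x2)) t x1 x2
      = a * (deriv ψ (c * t + w1 * x1 + w2 * x2) * w1) := by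
    have hin : HasDerivAt (fun y => c * t + w1 * y + w2 * x2) w1 x1 := by
      simpa using (((hasDerivAt_id x1).const_mul w1).const_add (c * t)).add_const (w2 * x2)
    exact (((hψ _).hasDerivAt.comp x1 hin).const_mul a).deriv
  have h2 (a : ℝ) : pd2 (fun t x1 x2 => a * ψ (c * t + w1 * x1 + w2 * x2)) t x1 x2
      = a * (deriv ψ (c * t + w1 * x1 + w2 * x2) * w2) := by
    have hin : HasDerivAt (fun y => c * t + w1 * x1 + w2 * y) w2 x2 := by
      simpa using ((hasDerivAt_id x2).const_mul w2).const_add (c * t + w1 * x1)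
    exact (((hψ _).hasDerivAt.comp x2 hin).const_mul a).deriv
  simp only [l3, divu, curlu, nullQ, h1, h2]
  ring

/-- Characterization of the first null condition: the cubic part `l₃` of the Lagrangian
density vanishes on all plane wave solutions of the linearized elastic system iff `d₁ = 0`. -/
theorem first_null_condition_iff (d1 d2 d3 c1 c2 : ℝ) (hc : c2 < c1) (hc2 : 0 < c2) :
    ((∀ ω : ℝ × ℝ, ω.1 ^ 2 + ω.2 ^ 2 = 1 → ∀ ψ1 : ℝ → ℝ, ContDiff ℝ (⊤ : ℕ∞) ψ1 →
        ∀ t x1 x2 : ℝ,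
          l3 d1 d2 d3
            (fun t x1 x2 => ω.1 * ψ1 (c1 * t + ω.1 * x1 + ω.2 * x2))
            (fun t x1 x2 => ω.2 * ψ1 (c1 * t + ω.1 * x1 + ω.2 * x2)) t x1 x2 = 0) ∧
      (∀ ω : ℝ × ℝ, ω.1 ^ 2 + ω.2 ^ 2 = 1 → ∀ ψ2 : ℝ → ℝ, ContDiff ℝ (⊤ : ℕ∞) ψ2 →
        ∀ t x1 x2 : ℝ,
          l3 d1 d2 d3
            (fun t x1 x2 => ω.2 * ψ2 (c2 * t + ω.1 * x1 + ω.2 * x2))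
            (fun t x1 x2 => -ω.1 * ψ2 (c2 * t + ω.1 * x1 + ω.2 * x2)) t x1 x2 = 0)) ↔
      d1 = 0 := by
  constructor
  · rintro ⟨h, -⟩
    have h0 := h (1, 0) (by norm_num) id contDiff_id 0 0 0
    rw [l3_planeWave _ _ _ _ _ _ _ _ _ differentiable_id] at h0
    simpa using h0
  · rintro rfl
    refine ⟨fun ω _ ψ hψ t x1 x2 => ?_, fun ω _ ψ hψ t x1 x2 => ?_⟩
    all_goals
      rw [l3_planeWave _ _ _ _ _ _ _ _ _ (hψ.differentiable (by simp))]
      ring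
end

section
/- Let e₁, e₂, e₃, e₄, e₅, e₆ be real constants and let c₁ > c₂ > 0. For a smooth vector field u : ℝ × ℝ² → ℝ² define l₄(∇u) = e₁(∇·u)⁴ + e₂(∇⊥·u)⁴ + e₃(∇·u)²(∇⊥·u)² + e₄Q₁₂²(u¹,u²) + e₅(∇·u)²Q₁₂(u¹,u²) + e₆(∇⊥·u)²Q₁₂(u¹,u²). Then the following are equivalent: (i) for every unit vector ω ∈ ℝ² and every smooth scalar function ψ₁, the pressure plane wave u(t,x) = ω ψ₁(c₁t + ω·x) satisfies l₄(∇u)(t,x) = 0 for all (t,x), and for every unit vector ω and every smooth scalar function ψ₂, the shear plane wave u(t,x) = ω⊥ ψ₂(c₂t + ω·x) satisfies l₄(∇u)(t,x) = 0 for all (t,x); (ii) e₁ = 0 and e₂ = 0. -/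
/-- The quartic part `l₄(∇u) = e₁(∇·u)⁴ + e₂(∇⊥·u)⁴ + e₃(∇·u)²(∇⊥·u)²
  + e₄Q₁₂² + e₅(∇·u)²Q₁₂ + e₆(∇⊥·u)²Q₁₂`. -/
noncomputable def l4 (e1 e2 e3 e4 e5 e6 : ℝ) (u1 u2 : ℝ → ℝ → ℝ → ℝ) : ℝ → ℝ → ℝ → ℝ :=
  fun t x1 x2 =>
    e1 * divu u1 u2 t x1 x2 ^ 4
      + e2 * curlu u1 u2 t x1 x2 ^ 4
      + e3 * divu u1 u2 t x1 x2 ^ 2 * curlu u1 u2 t x1 x2 ^ 2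
      + e4 * nullQ u1 u2 t x1 x2 ^ 2
      + e5 * divu u1 u2 t x1 x2 ^ 2 * nullQ u1 u2 t x1 x2
      + e6 * curlu u1 u2 t x1 x2 ^ 2 * nullQ u1 u2 t x1 x2

/-- The value of `l₄` on a plane wave with amplitude vector `(a, b)`: the three terms containing
the null form drop out because the gradient has rank at most one. -/
theorem l4_planeWave (e1 e2 e3 e4 e5 e6 c a b p q : ℝ) {ψ : ℝ → ℝ} (hψ : Differentiable ℝ ψ)
    (t x1 x2 : ℝ) :
    l4 e1 e2 e3 e4 e5 e6
        (fun t x1 x2 => a * ψ (c * t + p * x1 + q * x2))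
        (fun t x1 x2 => b * ψ (c * t + p * x1 + q * x2)) t x1 x2 =
      (e1 * (a * p + b * q) ^ 4 + e2 * (a * q - b * p) ^ 4
        + e3 * (a * p + b * q) ^ 2 * (a * q - b * p) ^ 2)
        * deriv ψ (c * t + p * x1 + q * x2) ^ 4 := by
  have h1 (k : ℝ) : deriv (fun y => k * ψ (c * t + p * y + q * x2)) x1
      = k * (deriv ψ (c * t + p * x1 + q * x2) * p) := by
    have hin : HasDerivAt (fun y => c * t + p * y + q * x2) p x1 := by
      simpa using (((hasDerivAt_id x1).const_mul p).const_add (c * t)).add_const (q * x2)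
    exact (((hψ (c * t + p * x1 + q * x2)).hasDerivAt.comp x1 hin).const_mul k).deriv
  have h2 (k : ℝ) : deriv (fun y => k * ψ (c * t + p * x1 + q * y)) x2
      = k * (deriv ψ (c * t + p * x1 + q * x2) * q) := by
    have hin : HasDerivAt (fun y => c * t + p * x1 + q * y) q x2 := by
      simpa using ((hasDerivAt_id x2).const_mul q).const_add (c * t + p * x1)
    exact (((hψ (c * t + p * x1 + q * x2)).hasDerivAt.comp x2 hin).const_mul k).deriv
  simp only [l4, divu, curlu, nullQ, pd1, pd2, h1, h2]
  ring

/-- Characterization of the second null condition: the quartic part `l₄` of the Lagrangian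
density vanishes on all plane wave solutions of the linearized elastic system iff
`e₁ = 0` and `e₂ = 0`. -/
theorem second_null_condition_iff (e1 e2 e3 e4 e5 e6 c1 c2 : ℝ)
    (hc : c2 < c1) (hc2 : 0 < c2) :
    ((∀ ω : ℝ × ℝ, ω.1 ^ 2 + ω.2 ^ 2 = 1 → ∀ ψ1 : ℝ → ℝ, ContDiff ℝ (⊤ : ℕ∞) ψ1 →
        ∀ t x1 x2 : ℝ,
          l4 e1 e2 e3 e4 e5 e6
            (fun t x1 x2 => ω.1 * ψ1 (c1 * t + ω.1 * x1 + ω.2 * x2))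
            (fun t x1 x2 => ω.2 * ψ1 (c1 * t + ω.1 * x1 + ω.2 * x2)) t x1 x2 = 0) ∧
      (∀ ω : ℝ × ℝ, ω.1 ^ 2 + ω.2 ^ 2 = 1 → ∀ ψ2 : ℝ → ℝ, ContDiff ℝ (⊤ : ℕ∞) ψ2 →
        ∀ t x1 x2 : ℝ,
          l4 e1 e2 e3 e4 e5 e6
            (fun t x1 x2 => ω.2 * ψ2 (c2 * t + ω.1 * x1 + ω.2 * x2))
            (fun t x1 x2 => -ω.1 * ψ2 (c2 * t + ω.1 * x1 + ω.2 * x2)) t x1 x2 = 0)) ↔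
      (e1 = 0 ∧ e2 = 0) := by
  constructor
  · rintro ⟨hP, hS⟩
    have h1 := hP (1, 0) (by norm_num) id contDiff_id 0 0 0
    have h2 := hS (1, 0) (by norm_num) id contDiff_id 0 0 0
    rw [l4_planeWave (hψ := differentiable_id)] at h1 h2
    norm_num at h1 h2
    exact ⟨h1, h2⟩
  · rintro ⟨rfl, rfl⟩
    refine ⟨fun ω _ ψ hψ t x1 x2 => ?_, fun ω _ ψ hψ t x1 x2 => ?_⟩ <;>
      rw [l4_planeWave (hψ := hψ.differentiable (by simp))] <;> ring
end
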